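/- Let p_1,…,p_m ∈ ℕ with each p_i ≥ 2 and Σ_{i=1}^m 1/p_i < m−1. Then the proportion of homomorphisms ρ : Γ_{p_1,…,p_m} → S_n that factor through Φ_{p_1,…,p_m} (equivalently, satisfy L_{p_1,…,p_m} ⊆ ker ρ) among all homomorphisms Γ_{p_1,…,p_m} → S_n tends to 1 as n → ∞; that is, |{ρ ∈ Hom(Γ_{p_1,…,p_m}, S_n) : ρ factors through Φ_{p_1,…,p_m}}| / h_n(Γ_{p_1,…,p_m}) → 1. -/

import Mathlib

open Filter Topology Asymptotics
open scoped TensorProduct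

/-- the relations `x_i ^ p_i = x_j ^ p_j` defining `Γ_{p_1,…,p_m}` -/
def torusRels (m : ℕ) (p : Fin m → ℕ) : Set (FreeGroup (Fin m)) :=
  {w : FreeGroup (Fin m) | ∃ i j : Fin m, w = FreeGroup.of i ^ p i * (FreeGroup.of j ^ p j)⁻¹}

/-- the group `Γ_{p_1,…,p_m} = ⟨x_1,…,x_m ∣ x_1^{p_1} = ⋯ = x_m^{p_m}⟩` -/
abbrev TorusKnotGroup (m : ℕ) (p : Fin m → ℕ) : Type :=
  PresentedGroup (torusRels m p)

/-- the relations `x_i ^ p_i = 1` defining `C_{p_1} * ⋯ * C_{p_m}` -/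
def cyclicRels (m : ℕ) (p : Fin m → ℕ) : Set (FreeGroup (Fin m)) :=
  {w : FreeGroup (Fin m) | ∃ i : Fin m, w = FreeGroup.of i ^ p i}

/-- the free product `C_{p_1} * ⋯ * C_{p_m}` of cyclic groups of orders `p_1, …, p_m`,
presented as `⟨x_1,…,x_m ∣ x_1^{p_1} = ⋯ = x_m^{p_m} = 1⟩`. -/
abbrev CyclicFreeProduct (m : ℕ) (p : Fin m → ℕ) : Type :=
  PresentedGroup (cyclicRels m p)

theorem cyclicFreeProduct_gen_pow (m : ℕ) (p : Fin m → ℕ) (i : Fin m) :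
    (PresentedGroup.of (rels := cyclicRels m p) i) ^ p i = 1 := by
  have : PresentedGroup.mk (cyclicRels m p) (FreeGroup.of i ^ p i) = 1 := by
    apply (QuotientGroup.eq_one_iff _).mpr
    exact Subgroup.subset_normalClosure ⟨i, rfl⟩
  rw [map_pow] at this
  exact this

/-- the projection `Φ_{p_1,…,p_m} : Γ_{p_1,…,p_m} → C_{p_1} * ⋯ * C_{p_m}`,
sending each generator `x_j` to the fixed generator of `C_{p_j}`;
its kernel is `L_{p_1,…,p_m}`. -/
noncomputable def PhiMap (m : ℕ) (p : Fin m → ℕ) :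
    TorusKnotGroup m p →* CyclicFreeProduct m p :=
  PresentedGroup.toGroup (f := fun i => PresentedGroup.of i) (by
    rintro w ⟨i, j, rfl⟩
    simp only [map_mul, map_pow, map_inv, FreeGroup.lift_apply_of]
    rw [cyclicFreeProduct_gen_pow, cyclicFreeProduct_gen_pow]
    simp)

/-! ### Orbits of a permutation and Burnside counting -/

/-- the set of cycles (including fixed points) of a permutation -/
abbrev CycQ {β : Type} (c : Equiv.Perm β) : Type := Quotient (Equiv.Perm.SameCycle.setoid c)

theorem exists_perm_of_map_eq {β : Type} [Fintype β] {X : ℕ} (f g : β → Fin X)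
    (h : Multiset.map f Finset.univ.val = Multiset.map g Finset.univ.val) :
    ∃ σ : Equiv.Perm β, ∀ a, g (σ a) = f a := by
  classical
  have hc : ∀ i : Fin X, Nonempty ({a // f a = i} ≃ {a // g a = i}) := by
    intro i
    refine ⟨Fintype.equivOfCardEq ?_⟩
    have := congrArg (Multiset.count i) h
    rw [Multiset.count_map, Multiset.count_map] at this
    rw [Fintype.card_subtype, Fintype.card_subtype]
    simp only [Finset.card_def, Finset.filter_val]
    simpa [eq_comm] using this
  let e := fun i => Classical.choice (hc i)
  refine ⟨(Equiv.sigmaFiberEquiv f).symm.trans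
    ((Equiv.sigmaCongrRight e).trans (Equiv.sigmaFiberEquiv g)), fun a => ?_⟩
  exact (e (f a) ⟨a, rfl⟩).2

theorem card_orbits_le {β : Type} [Fintype β] (X : ℕ)  :
    letI : MulAction (Equiv.Perm β) (β → Fin X) := arrowAction
    Nat.card (Quotient (MulAction.orbitRel (Equiv.Perm β) (β → Fin X))) ≤
      (X + Fintype.card β - 1).choose (Fintype.card β) := by
  classical
  let : MulAction (Equiv.Perm β) (β → Fin X) := arrowAction
  have hsm : ∀ (g : Equiv.Perm β) (f : β → Fin X) (a : β), (g • f) a = f (g⁻¹ a) :=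
    fun g f a => rfl
  have hk := Sym.card_sym_eq_choose (α := Fin X) (Fintype.card β)
  rw [Fintype.card_fin] at hk
  rw [← hk, ← Nat.card_eq_fintype_card]
  let F : (β → Fin X) → Sym (Fin X) (Fintype.card β) := fun f =>
    ⟨Multiset.map f Finset.univ.val, by simp⟩
  have hF : ∀ f g : β → Fin X, (MulAction.orbitRel (Equiv.Perm β) (β → Fin X)) f g → F f = F g := by
    rintro f g ⟨σ, rfl⟩
    apply Subtype.ext
    change Multiset.map (fun a => g (σ⁻¹ a)) Finset.univ.val = Multiset.map g Finset.univ.val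
    have : Multiset.map (σ⁻¹ : Equiv.Perm β) Finset.univ.val = Finset.univ.val :=
      Multiset.map_univ_val_equiv (σ⁻¹ : Equiv.Perm β)
    conv_rhs => rw [← this, Multiset.map_map]
    rfl
  refine Nat.card_le_card_of_injective (Quotient.lift F hF) ?_
  rintro ⟨f⟩ ⟨g⟩ hfg
  have hfg' : F f = F g := hfg
  obtain ⟨σ, hσ⟩ := exists_perm_of_map_eq f g (congrArg Subtype.val hfg')
  apply Quotient.sound
  refine ⟨σ⁻¹, ?_⟩
  funext a
  change g ((σ⁻¹)⁻¹ a) = f a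
  rw [inv_inv, hσ]

theorem burnside_bound {β : Type} [Fintype β] [DecidableEq β] (X : ℕ) (hX : X ≤ Fintype.card β) :
    ∑ σ : Equiv.Perm β, X ^ Nat.card (CycQ σ) ≤ (Fintype.card β).factorial * 4 ^ Fintype.card β := by
  classical
  let : MulAction (Equiv.Perm β) (β → Fin X) := arrowAction
  have hb := MulAction.sum_card_fixedBy_eq_card_orbits_mul_card_group (Equiv.Perm β) (β → Fin X)
  have ho := card_orbits_le (β := β) X
  have h1 : ∀ σ : Equiv.Perm β, X ^ Nat.card (CycQ σ) ≤
      Fintype.card (MulAction.fixedBy (β → Fin X) σ) := by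
    intro σ
    have : X ^ Nat.card (CycQ σ) = Nat.card (CycQ σ → Fin X) := by
      rw [Nat.card_fun]; simp
    rw [this, ← Nat.card_eq_fintype_card]
    refine Nat.card_le_card_of_injective
      (fun f => ⟨fun a => f (Quotient.mk _ a), ?_⟩) ?_
    · rw [MulAction.mem_fixedBy]
      funext a
      change f (Quotient.mk _ (σ⁻¹ a)) = f (Quotient.mk _ a)
      congr 1
      apply Quotient.sound
      change σ.SameCycle (σ⁻¹ a) a
      exact ⟨1, by simp⟩
    · intro f g hfg
      funext o
      induction o using Quotient.inductionOn with
      | h a => exact congrFun (congrArg Subtype.val hfg) a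
  calc _ ≤ _ := Finset.sum_le_sum fun σ _ => h1 σ
    _ = _ := hb
    _ ≤ 4 ^ Fintype.card β * (Fintype.card β).factorial := by
        rw [Fintype.card_perm, ← Nat.card_eq_fintype_card]
        refine Nat.mul_le_mul_right _ (ho.trans ?_)
        refine (Nat.choose_le_two_pow _ _).trans ?_
        rw [show (4:ℕ) = 2 ^ 2 by norm_num, ← pow_mul]
        exact Nat.pow_le_pow_right (by norm_num) (by omega)
    _ = _ := mul_comm _ _

/-- the `p`-torsion of the symmetric group -/
abbrev Tor (p : ℕ) (β : Type) : Type := {x : Equiv.Perm β // x ^ p = 1}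

theorem card_le_of_tor {β : Type} [Finite β] (p : ℕ) (hp : 1 ≤ p) (x : Equiv.Perm β)
    (hx : x ^ p = 1) : Nat.card β ≤ p * Nat.card (CycQ x) := by
  have : Nat.card (Fin p × CycQ x) = p * Nat.card (CycQ x) := by simp
  rw [← this]
  refine Nat.card_le_card_of_surjective (fun z => (x ^ (z.1 : ℕ)) z.2.out) ?_
  intro b
  have h : x.SameCycle (Quotient.mk (Equiv.Perm.SameCycle.setoid x) b).out b :=
    Quotient.mk_out (s := Equiv.Perm.SameCycle.setoid x) b
  obtain ⟨i, hi⟩ := h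
  have hp' : (0 : ℤ) < p := by exact_mod_cast hp
  have h0 := Int.emod_nonneg i hp'.ne'
  have h1 := Int.emod_lt_of_pos i hp'
  refine ⟨(⟨(i % p).toNat, by omega⟩, Quotient.mk _ b), ?_⟩
  have h2 : x ^ (i % p).toNat = x ^ i := by
    rw [← zpow_natCast, Int.toNat_of_nonneg h0]
    conv_rhs => rw [← Int.emod_add_mul_ediv i p, zpow_add, zpow_mul, zpow_natCast, hx]
    simp
  simp only [h2, hi]

theorem tor_upper {β : Type} [Finite β] (p : ℕ) (hp : 1 ≤ p) :
    (Nat.card (Tor p β) : ℝ) ≤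
      4 ^ Nat.card β * (Nat.card β : ℝ) ^ ((Nat.card β : ℝ) * (1 - 1 / (p : ℝ))) := by
  classical
  have := Fintype.ofFinite β
  set q := Nat.card β with hq
  have hq' : Fintype.card β = q := by rw [hq, Nat.card_eq_fintype_card]
  have hb := burnside_bound (β := β) q (by rw [hq'])
  rw [hq'] at hb
  rcases Nat.eq_zero_or_pos q with h0 | hpos
  · have : Nat.card (Tor p β) ≤ 1 := by
      have : IsEmpty β := by
        rw [← Fintype.card_eq_zero_iff, hq', h0]
      exact Finite.card_le_one_iff_subsingleton.mpr inferInstance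
    rw [h0]
    simp only [pow_zero, Nat.cast_zero, zero_mul, Real.rpow_zero, mul_one]
    exact_mod_cast this
  have hqR : (1 : ℝ) ≤ q := by exact_mod_cast hpos
  have hpR : (0 : ℝ) < p := by exact_mod_cast hp
  have h1 : (Nat.card (Tor p β) : ℝ) * (q : ℝ) ^ ((q : ℝ) / p) ≤ (q.factorial : ℝ) * 4 ^ q := by
    have hb' : ∑ σ : Equiv.Perm β, (q : ℝ) ^ Nat.card (CycQ σ) ≤ (q.factorial : ℝ) * 4 ^ q := by
      exact_mod_cast hb
    refine le_trans ?_ hb'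
    have : ∑ σ ∈ Finset.univ.filter (fun σ : Equiv.Perm β => σ ^ p = 1), (q : ℝ) ^ ((q : ℝ) / p) ≤
        ∑ σ ∈ Finset.univ.filter (fun σ : Equiv.Perm β => σ ^ p = 1),
          (q : ℝ) ^ Nat.card (CycQ σ) := by
      refine Finset.sum_le_sum fun σ hσ => ?_
      rw [← Real.rpow_natCast]
      refine Real.rpow_le_rpow_of_exponent_le hqR ?_
      rw [div_le_iff₀ hpR]
      have := card_le_of_tor p hp σ (by simpa using hσ)
      rw [← hq, mul_comm] at this
      exact_mod_cast this
    rw [Finset.sum_const, nsmul_eq_mul, ← Fintype.card_subtype, ← Nat.card_eq_fintype_card] at this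
    refine this.trans (Finset.sum_le_sum_of_subset_of_nonneg (Finset.filter_subset _ _) ?_)
    intros; positivity
  have h2 : (q.factorial : ℝ) ≤ (q : ℝ) ^ (q : ℝ) := by
    rw [Real.rpow_natCast]; exact_mod_cast Nat.factorial_le_pow q
  have h3 : (q : ℝ) ^ ((q : ℝ) * (1 - 1 / (p : ℝ))) * (q : ℝ) ^ ((q : ℝ) / p) = (q : ℝ) ^ (q : ℝ) := by
    rw [← Real.rpow_add (by linarith)]
    congr 1; field_simp; ring
  have h4 : (0 : ℝ) < (q : ℝ) ^ ((q : ℝ) / p) := by positivity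
  refine le_of_mul_le_mul_right (h1.trans ?_) h4
  rw [mul_assoc, h3, mul_comm]
  gcongr

/-! ### Growth of the number of `p`-torsion permutations -/

theorem tor_card_congr {α β : Type} (p : ℕ) (e : α ≃ β) :
    Nat.card (Tor p α) = Nat.card (Tor p β) := by
  refine Nat.card_congr (Equiv.subtypeEquiv e.permCongrHom.toEquiv fun x => ?_)
  change x ^ p = 1 ↔ (e.permCongrHom x) ^ p = 1
  rw [← map_pow, map_eq_one_iff _ e.permCongrHom.injective]

theorem sum_fix_ge (p n : ℕ) :
    (n + 1) * Nat.card (Tor p (Fin n)) ≤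
      ∑ x : Tor p (Fin (n + 1)), Nat.card {a // x.1 a = a} := by
  classical
  have h1 : Nat.card (Σ a : Fin (n + 1), Tor p {b // b ≠ a}) =
      (n + 1) * Nat.card (Tor p (Fin n)) := by
    rw [Nat.card_sigma]
    have : ∀ a : Fin (n + 1), Nat.card (Tor p {b // b ≠ a}) = Nat.card (Tor p (Fin n)) := by
      intro a
      apply tor_card_congr
      exact Fintype.equivOfCardEq (by simp)
    rw [Finset.sum_congr rfl fun a _ => this a]
    simp
  have h2 : Nat.card (Σ x : Tor p (Fin (n + 1)), {a // x.1 a = a}) =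
      ∑ x : Tor p (Fin (n + 1)), Nat.card {a // x.1 a = a} := by
    rw [Nat.card_sigma]
  rw [← h1, ← h2]
  refine Nat.card_le_card_of_injective (fun z => ⟨⟨Equiv.Perm.ofSubtype z.2.1, ?_⟩, z.1, ?_⟩) ?_
  · rw [← map_pow, z.2.2, map_one]
  · exact Equiv.Perm.ofSubtype_apply_of_not_mem _ (by simp)
  · rintro ⟨a, y⟩ ⟨b, z⟩ h
    have hab : a = b := by
      have := congrArg (fun w : (Σ x : Tor p (Fin (n + 1)), {a // x.1 a = a}) => w.2.1) h
      exact this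
    subst hab
    have hyz := congrArg (fun w : (Σ x : Tor p (Fin (n + 1)), {a // x.1 a = a}) => w.1.1) h
    have := Equiv.Perm.ofSubtype_injective hyz
    have hyz' : y = z := Subtype.ext this
    rw [hyz']

open scoped Fin.CommRing in
theorem sum_descFactorial_fix_le (p n : ℕ) :
    ∑ x : Tor (p + 1) (Fin n), (Nat.card {a // x.1 a = a}).descFactorial (p + 1) ≤
      Nat.card (Tor (p + 1) (Fin n)) * n := by
  classical
  have h1 : Nat.card (Σ x : Tor (p + 1) (Fin n), (Fin (p + 1) ↪ {a // x.1 a = a})) =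
      ∑ x : Tor (p + 1) (Fin n), (Nat.card {a // x.1 a = a}).descFactorial (p + 1) := by
    rw [Nat.card_sigma]
    refine Finset.sum_congr rfl fun x _ => ?_
    rw [Nat.card_eq_fintype_card, Fintype.card_embedding_eq, Nat.card_eq_fintype_card,
      Fintype.card_fin]
  have h2 : Nat.card (Tor (p + 1) (Fin n) × Fin n) = Nat.card (Tor (p + 1) (Fin n)) * n := by
    rw [Nat.card_prod]; simp
  rw [← h1, ← h2]
  -- the cycle attached to an embedding
  let emb : (z : Σ x : Tor (p + 1) (Fin n), (Fin (p + 1) ↪ {a // x.1 a = a})) →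
      (Fin (p + 1) ↪ Fin n) := fun z => z.2.trans (Function.Embedding.subtype _)
  let cyc : (Fin (p + 1) ↪ Fin n) → Equiv.Perm (Fin n) := fun e =>
    (finRotate (p + 1)).viaFintypeEmbedding e
  have hcyc : ∀ e : Fin (p + 1) ↪ Fin n, ∀ i, cyc e (e i) = e (i + 1) := by
    intro e i
    simp only [cyc, Equiv.Perm.viaFintypeEmbedding_apply_image, finRotate_apply]
  have hcyc' : ∀ e : Fin (p + 1) ↪ Fin n, ∀ a, a ∉ Set.range e → cyc e a = a := by
    intro e a ha
    exact Equiv.Perm.viaFintypeEmbedding_apply_notMem_range _ _ ha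
  have hcpow : ∀ e : Fin (p + 1) ↪ Fin n, cyc e ^ (p + 1) = 1 := by
    intro e
    ext a
    by_cases ha : a ∈ Set.range e
    · obtain ⟨i, rfl⟩ := ha
      have : ∀ k : ℕ, (cyc e ^ k) (e i) = e (i + (k : Fin (p + 1))) := by
        intro k
        induction k with
        | zero => simp
        | succ k ih =>
          rw [pow_succ', Equiv.Perm.mul_apply, ih, hcyc]
          congr 1
          push_cast
          ring
      rw [this]
      simp
    · have : ∀ k : ℕ, (cyc e ^ k) a = a := by
        intro k
        induction k with
        | zero => simp
        | succ k ih => rw [pow_succ', Equiv.Perm.mul_apply, ih, hcyc' e a ha]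
      rw [this]; simp
  have hfix : ∀ z i, z.1.1 (emb z i) = emb z i := fun z i => (z.2 i).2
  have hcomm : ∀ z, Commute z.1.1 (cyc (emb z)) := by
    intro z
    apply Equiv.Perm.Disjoint.commute
    intro a
    by_cases ha : a ∈ Set.range (emb z)
    · obtain ⟨i, rfl⟩ := ha
      exact Or.inl (hfix z i)
    · exact Or.inr (hcyc' _ a ha)
  refine Nat.card_le_card_of_injective
    (fun z => (⟨z.1.1 * cyc (emb z), ?_⟩, emb z 0)) ?_
  · rw [(hcomm z).mul_pow, z.1.2, hcpow, one_mul]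
  · intro z w h
    have hy : z.1.1 * cyc (emb z) = w.1.1 * cyc (emb w) :=
      congrArg (fun u : Tor (p + 1) (Fin n) × Fin n => u.1.1) h
    have h0 : emb z 0 = emb w 0 := congrArg (fun u : Tor (p + 1) (Fin n) × Fin n => u.2) h
    have hstep : ∀ z i, (z.1.1 * cyc (emb z)) (emb z i) = emb z (i + 1) := by
      intro z i
      rw [Equiv.Perm.mul_apply, hcyc, hfix]
    have hall : ∀ k : ℕ, emb z (k : Fin (p + 1)) = emb w (k : Fin (p + 1)) := by
      intro k
      induction k with
      | zero => simpa using h0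
      | succ k ih =>
        push_cast
        rw [← hstep, ← hstep, ih, hy]
    have hemb : emb z = emb w := by
      ext i
      have := hall i
      simpa using congrArg Fin.val this
    rw [hemb] at hy
    have hx : z.1 = w.1 := Subtype.ext (mul_right_cancel hy)
    obtain ⟨x, e⟩ := z
    obtain ⟨x', e'⟩ := w
    obtain rfl : x = x' := hx
    congr 1
    ext i
    exact congrArg Fin.val (DFunLike.congr_fun hemb i)

theorem fix_le_aux (f p : ℕ) (l : ℝ) (hl : 0 < l) :
    (f : ℝ) ≤ (p + 1 : ℝ) + l + (f.descFactorial (p + 1) : ℝ) / l ^ p := by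
  have hd : (0 : ℝ) ≤ (f.descFactorial (p + 1) : ℝ) / l ^ p := by positivity
  by_cases h : (f : ℝ) ≤ (p + 1 : ℝ) + l
  · linarith
  push Not at h
  have hfp : p ≤ f := by
    have : (p : ℝ) ≤ f := by linarith
    exact_mod_cast this
  have h1 := Nat.pow_sub_le_descFactorial f (p + 1)
  have h2 : f + 1 - (p + 1) = f - p := by omega
  rw [h2] at h1
  have h3 : ((f : ℝ) - p) ^ (p + 1) ≤ (f.descFactorial (p + 1) : ℝ) := by
    rw [← Nat.cast_sub hfp]; exact_mod_cast h1
  have h4 : (f : ℝ) - p ≤ (f.descFactorial (p + 1) : ℝ) / l ^ p := by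
    rw [le_div_iff₀ (by positivity)]
    refine le_trans ?_ h3
    rw [pow_succ']
    have : l ≤ (f : ℝ) - p := by linarith
    gcongr
    linarith
  linarith

theorem tor_step (p n : ℕ) (hp : 1 ≤ p) :
    (Nat.card (Tor p (Fin n)) : ℝ) * ((n + 1 : ℕ) : ℝ) ^ (1 - 1 / (p : ℝ)) ≤
      (p + 2 : ℝ) * Nat.card (Tor p (Fin (n + 1))) := by
  obtain ⟨p, rfl⟩ : ∃ p', p = p' + 1 := ⟨p - 1, by omega⟩
  have hA := sum_fix_ge (p + 1) n
  have hB := sum_descFactorial_fix_le p (n + 1)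
  set N : ℝ := ((n + 1 : ℕ) : ℝ) with hN
  have hN1 : 1 ≤ N := by rw [hN]; exact_mod_cast Nat.succ_le_succ (Nat.zero_le n)
  have hN0 : 0 < N := by linarith
  set T : ℝ := (Nat.card (Tor (p + 1) (Fin (n + 1))) : ℝ) with hT
  set T' : ℝ := (Nat.card (Tor (p + 1) (Fin n)) : ℝ) with hT'
  have hpp : (0 : ℝ) < ((p + 1 : ℕ) : ℝ) := by positivity
  set l : ℝ := N ^ (1 / ((p + 1 : ℕ) : ℝ)) with hl
  have hl0 : 0 < l := by positivity
  have hl1 : 1 ≤ l := Real.one_le_rpow hN1 (by positivity)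
  have hlp : l ^ p * l = N := by
    rw [← pow_succ, hl, ← Real.rpow_natCast, ← Real.rpow_mul hN0.le]
    rw [one_div_mul_cancel hpp.ne', Real.rpow_one]
  have hA' : N * T' ≤ ∑ x : Tor (p + 1) (Fin (n + 1)), (Nat.card {a // x.1 a = a} : ℝ) := by
    rw [hN, hT']
    exact_mod_cast hA
  have hB' : ∑ x : Tor (p + 1) (Fin (n + 1)),
      ((Nat.card {a // x.1 a = a}).descFactorial (p + 1) : ℝ) ≤ T * N := by
    rw [hN, hT]
    exact_mod_cast hB
  have hC : ∑ x : Tor (p + 1) (Fin (n + 1)), (Nat.card {a // x.1 a = a} : ℝ) ≤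
      T * ((p + 1 : ℝ) + l) + T * l := by
    calc _ ≤ ∑ x : Tor (p + 1) (Fin (n + 1)), ((p + 1 : ℝ) + l +
          ((Nat.card {a // x.1 a = a}).descFactorial (p + 1) : ℝ) / l ^ p) :=
          Finset.sum_le_sum fun x _ => fix_le_aux _ p l hl0
      _ = T * ((p + 1 : ℝ) + l) + (∑ x : Tor (p + 1) (Fin (n + 1)),
          ((Nat.card {a // x.1 a = a}).descFactorial (p + 1) : ℝ)) / l ^ p := by
          rw [Finset.sum_add_distrib, Finset.sum_const, nsmul_eq_mul, Finset.sum_div,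
            Finset.card_univ, ← Nat.card_eq_fintype_card]
      _ ≤ T * ((p + 1 : ℝ) + l) + T * l := by
          gcongr
          rw [div_le_iff₀ (by positivity)]
          refine hB'.trans_eq ?_
          rw [← hlp]; ring
  have hT0 : 0 ≤ T := by positivity
  have hT'0 : 0 ≤ T' := by positivity
  have hNl : N ^ (1 - 1 / ((p + 1 : ℕ) : ℝ)) * l = N := by
    rw [hl, ← Real.rpow_add hN0]; simp
  refine le_of_mul_le_mul_right ?_ hl0
  rw [mul_assoc, hNl]
  push_cast
  have : T * (p + 1) ≤ T * (p + 1) * l := le_mul_of_one_le_right (by positivity) hl1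
  nlinarith [hA'.trans hC]

theorem tor_steps (p : ℕ) (hp : 1 ≤ p) (n k : ℕ) :
    (Nat.card (Tor p (Fin n)) : ℝ) *
      ((n + k).descFactorial k : ℝ) ^ (1 - 1 / (p : ℝ)) ≤
      (p + 2 : ℝ) ^ k * Nat.card (Tor p (Fin (n + k))) := by
  induction k with
  | zero => simp
  | succ k ih =>
    have h1 := tor_step p (n + k) hp
    have h2 : (n + (k + 1)).descFactorial (k + 1) = (n + k + 1) * (n + k).descFactorial k := by
      rw [← add_assoc, Nat.succ_descFactorial_succ]
    rw [h2, Nat.cast_mul, Real.mul_rpow (by positivity) (by positivity)]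
    have h3 : (0 : ℝ) ≤ ((n + k + 1 : ℕ) : ℝ) ^ (1 - 1 / (p : ℝ)) := by positivity
    calc _ = ((Nat.card (Tor p (Fin n)) : ℝ) *
          ((n + k).descFactorial k : ℝ) ^ (1 - 1 / (p : ℝ))) *
            ((n + k + 1 : ℕ) : ℝ) ^ (1 - 1 / (p : ℝ)) := by ring
      _ ≤ ((p + 2 : ℝ) ^ k * Nat.card (Tor p (Fin (n + k)))) *
            ((n + k + 1 : ℕ) : ℝ) ^ (1 - 1 / (p : ℝ)) := by gcongr
      _ = (p + 2 : ℝ) ^ k * (Nat.card (Tor p (Fin (n + k))) *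
            ((n + k + 1 : ℕ) : ℝ) ^ (1 - 1 / (p : ℝ))) := by ring
      _ ≤ (p + 2 : ℝ) ^ k * ((p + 2 : ℝ) * Nat.card (Tor p (Fin (n + k + 1)))) := by gcongr
      _ = _ := by rw [pow_succ]; ring_nf

/-! ### Roots of a permutation -/

theorem sameCycle_commute_iff {β : Type} {c x : Equiv.Perm β} (h : Commute x c) (a b : β) :
    c.SameCycle a b ↔ c.SameCycle (x a) (x b) := by
  have key : ∀ i : ℤ, (c ^ i) (x a) = x ((c ^ i) a) := by
    intro i
    have := (h.zpow_right i).eq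
    exact (DFunLike.congr_fun this a).symm
  constructor
  · rintro ⟨i, hi⟩
    exact ⟨i, by rw [key, hi]⟩
  · rintro ⟨i, hi⟩
    exact ⟨i, x.injective (by rw [← key, hi])⟩

/-- the permutation of the cycles of `c` induced by a permutation commuting with `c` -/
def inducedPerm {β : Type} {c x : Equiv.Perm β} (h : Commute x c) : Equiv.Perm (CycQ c) :=
  Quotient.congr x (sameCycle_commute_iff h)

theorem inducedPerm_mk {β : Type} {c x : Equiv.Perm β} (h : Commute x c) (a : β) :
    inducedPerm h (Quotient.mk _ a) = Quotient.mk _ (x a) := rfl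

theorem inducedPerm_pow_mk {β : Type} {c x : Equiv.Perm β} (h : Commute x c) (a : β) (k : ℕ) :
    (inducedPerm h ^ k) (Quotient.mk _ a) = Quotient.mk _ ((x ^ k) a) := by
  induction k with
  | zero => rfl
  | succ k ih => rw [pow_succ', Equiv.Perm.mul_apply, ih, inducedPerm_mk, pow_succ']; rfl

theorem commute_of_pow {β : Type} {c x : Equiv.Perm β} {p : ℕ} (h : x ^ p = c) : Commute x c := by
  rw [← h]; exact Commute.self_pow x p

theorem inducedPerm_tor {β : Type} {c x : Equiv.Perm β} {p : ℕ} (h : x ^ p = c) :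
    inducedPerm (commute_of_pow h) ^ p = 1 := by
  ext o
  induction o using Quotient.inductionOn with
  | h a =>
    rw [inducedPerm_pow_mk, h]
    apply Quotient.sound
    change c.SameCycle (c a) a
    exact ⟨-1, by simp⟩

theorem roots_bound {β : Type} [Finite β] (p : ℕ) (c : Equiv.Perm β) :
    Nat.card {x : Equiv.Perm β // x ^ p = c} ≤ Nat.card (Tor p (CycQ c)) * 2 ^ Nat.card β := by
  classical
  have := Fintype.ofFinite β
  have h2 : Nat.card (Tor p (CycQ c) × Set β) = Nat.card (Tor p (CycQ c)) * 2 ^ Nat.card β := by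
    rw [Nat.card_prod]
    congr 1
    rw [Nat.card_eq_fintype_card, Fintype.card_set, Nat.card_eq_fintype_card]
  rw [← h2]
  refine Nat.card_le_card_of_injective
    (fun x => (⟨inducedPerm (commute_of_pow x.2), inducedPerm_tor x.2⟩,
      Set.range fun o : CycQ c => x.1 o.out)) ?_
  intro x y h
  have hbar : inducedPerm (commute_of_pow x.2) = inducedPerm (commute_of_pow y.2) :=
    congrArg (fun u : Tor p (CycQ c) × Set β => u.1.1) h
  have hr : (Set.range fun o : CycQ c => x.1 o.out) = Set.range fun o : CycQ c => y.1 o.out :=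
    congrArg (fun u : Tor p (CycQ c) × Set β => u.2) h
  have hout : ∀ o : CycQ c, x.1 o.out = y.1 o.out := by
    intro o
    have : x.1 o.out ∈ Set.range fun o : CycQ c => y.1 o.out := by
      rw [← hr]; exact ⟨o, rfl⟩
    obtain ⟨o', ho'⟩ := this
    have e1 := inducedPerm_mk (commute_of_pow x.2) o.out
    have e2 := inducedPerm_mk (commute_of_pow y.2) o'.out
    rw [Quotient.out_eq] at e1 e2
    have ho'' : y.1 o'.out = x.1 o.out := ho'
    rw [ho'', ← e1, hbar] at e2
    have := (inducedPerm (commute_of_pow y.2)).injective e2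
    rw [← ho'', this]
  apply Subtype.ext
  ext b
  have hb : c.SameCycle (Quotient.mk (Equiv.Perm.SameCycle.setoid c) b).out b :=
    Quotient.mk_out (s := Equiv.Perm.SameCycle.setoid c) b
  obtain ⟨i, hi⟩ := hb
  have key : ∀ z : {x : Equiv.Perm β // x ^ p = c}, ∀ a, (c ^ i) (z.1 a) = z.1 ((c ^ i) a) := by
    intro z a
    have := ((commute_of_pow z.2).zpow_right i).eq
    exact (DFunLike.congr_fun this a).symm
  rw [← hi, ← key, ← key, hout]

theorem two_cyc_le {β : Type} [Finite β] (c : Equiv.Perm β) (hc : ∀ b, c b ≠ b) :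
    2 * Nat.card (CycQ c) ≤ Nat.card β := by
  have h2 : Nat.card (CycQ c ⊕ CycQ c) = 2 * Nat.card (CycQ c) := by
    rw [Nat.card_sum]; ring
  rw [← h2]
  have hmk : ∀ o : CycQ c, (Quotient.mk _ (c o.out) : CycQ c) = o := by
    intro o
    conv_rhs => rw [← Quotient.out_eq o]
    apply Quotient.sound
    change c.SameCycle (c o.out) o.out
    exact ⟨-1, by simp⟩
  refine Nat.card_le_card_of_injective
    (Sum.elim (fun o => o.out) (fun o => c o.out)) ?_
  have hne : ∀ o o' : CycQ c, o.out ≠ c o'.out := by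
    intro o o' h
    have h' := congrArg (Quotient.mk (Equiv.Perm.SameCycle.setoid c)) h
    rw [hmk, Quotient.out_eq] at h'
    subst h'
    exact hc _ h.symm
  rintro (o | o) (o' | o') h
  · simp only [Sum.elim_inl] at h
    rw [← Quotient.out_eq o, h, Quotient.out_eq]
  · exact absurd h (hne _ _)
  · exact absurd h.symm (hne _ _)
  · simp only [Sum.elim_inr] at h
    rw [← hmk o, h, hmk]

/-- tuples of permutations with a common fixed-point-free power -/
abbrev DerTup (m : ℕ) (p : Fin m → ℕ) (β : Type) : Type :=
  {x : Fin m → Equiv.Perm β // ∃ c : Equiv.Perm β, (∀ i, x i ^ p i = c) ∧ ∀ b, c b ≠ b}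

theorem derTup_le_sum (m : ℕ) (p : Fin m → ℕ) (β : Type) [Fintype β] [DecidableEq β] :
    Nat.card (DerTup m p β) ≤ ∑ c : {c : Equiv.Perm β // ∀ b, c b ≠ b},
      ∏ i, (Nat.card (Tor (p i) (CycQ c.1)) * 2 ^ Nat.card β) := by
  calc Nat.card (DerTup m p β) ≤
      Nat.card (Σ c : {c : Equiv.Perm β // ∀ b, c b ≠ b},
        ∀ i, {x : Equiv.Perm β // x ^ p i = c.1}) := by
        refine Nat.card_le_card_of_injective
          (fun z => ⟨⟨z.2.choose, z.2.choose_spec.2⟩, fun i => ⟨z.1 i, z.2.choose_spec.1 i⟩⟩) ?_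
        intro z w h
        apply Subtype.ext
        exact congrArg (fun u : (Σ c : {c : Equiv.Perm β // ∀ b, c b ≠ b},
          ∀ i, {x : Equiv.Perm β // x ^ p i = c.1}) => fun i => (u.2 i).1) h
    _ = ∑ c : {c : Equiv.Perm β // ∀ b, c b ≠ b},
        ∏ i, Nat.card {x : Equiv.Perm β // x ^ p i = c.1} := by
        rw [Nat.card_sigma]
        exact Finset.sum_congr rfl fun c _ => Nat.card_pi
    _ ≤ _ := Finset.sum_le_sum fun c _ => Finset.prod_le_prod' fun i _ => roots_bound (p i) c.1

theorem sum_cyc_pow_le (β : Type) [Fintype β] [DecidableEq β] :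
    ∑ c : Equiv.Perm β, Nat.card (CycQ c) ^ Nat.card (CycQ c) ≤
      (Fintype.card β).factorial * 8 ^ Fintype.card β := by
  set k := Fintype.card β with hk
  have hle : ∀ c : Equiv.Perm β, Nat.card (CycQ c) ≤ k := by
    intro c
    rw [hk, ← Nat.card_eq_fintype_card]
    exact Nat.card_le_card_of_surjective (Quotient.mk _) Quotient.mk_surjective
  calc _ ≤ ∑ c : Equiv.Perm β, ∑ X ∈ Finset.range (k + 1), X ^ Nat.card (CycQ c) := by
        refine Finset.sum_le_sum fun c _ => ?_
        exact Finset.single_le_sum (f := fun X => X ^ Nat.card (CycQ c)) (fun _ _ => Nat.zero_le _)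
          (Finset.mem_range.mpr (Nat.lt_succ_of_le (hle c)))
    _ = ∑ X ∈ Finset.range (k + 1), ∑ c : Equiv.Perm β, X ^ Nat.card (CycQ c) := Finset.sum_comm
    _ ≤ ∑ X ∈ Finset.range (k + 1), k.factorial * 4 ^ k :=
        Finset.sum_le_sum fun X hX =>
          burnside_bound X (Nat.lt_succ_iff.mp (Finset.mem_range.mp hX))
    _ = (k + 1) * (k.factorial * 4 ^ k) := by simp
    _ ≤ 2 ^ k * (k.factorial * 4 ^ k) := Nat.mul_le_mul_right _ (Nat.lt_two_pow_self)
    _ = k.factorial * 8 ^ k := by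
        rw [show (8 : ℕ) = 2 * 4 by norm_num, mul_pow]; ring

theorem derTup_bound (m : ℕ) (p : Fin m → ℕ) (hp : ∀ i, 1 ≤ p i) (δ : ℝ) (hδ : 0 < δ)
    (hs : ∑ i, (1 - 1 / (p i : ℝ)) = 1 + δ) (β : Type) [Fintype β]
    (hβ : 1 ≤ Fintype.card β) :
    (Nat.card (DerTup m p β) : ℝ) ≤ (Fintype.card β).factorial * (8 ^ m * 8) ^ Fintype.card β *
      (Fintype.card β : ℝ) ^ ((Fintype.card β : ℝ) * δ / 2) := by
  classical
  set k := Fintype.card β with hk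
  have hk' : Nat.card β = k := by rw [hk, Nat.card_eq_fintype_card]
  have hkR : (1 : ℝ) ≤ k := by exact_mod_cast hβ
  have h1 : (Nat.card (DerTup m p β) : ℝ) ≤ ∑ c : {c : Equiv.Perm β // ∀ b, c b ≠ b},
      ∏ i, ((Nat.card (Tor (p i) (CycQ c.1)) : ℝ) * 2 ^ k) := by
    have := derTup_le_sum m p β
    rw [hk'] at this
    exact_mod_cast this
  have h2 : ∀ c : {c : Equiv.Perm β // ∀ b, c b ≠ b},
      ∏ i, ((Nat.card (Tor (p i) (CycQ c.1)) : ℝ) * 2 ^ k) ≤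
        ((8 ^ m) ^ k * (k : ℝ) ^ ((k : ℝ) * δ / 2)) *
          (Nat.card (CycQ c.1) : ℝ) ^ Nat.card (CycQ c.1) := by
    intro c
    have hq2 := two_cyc_le c.1 c.2
    rw [hk'] at hq2
    set q := Nat.card (CycQ c.1) with hq
    have hqk : q ≤ k := by omega
    have hprod : ∏ i, (q : ℝ) ^ ((q : ℝ) * (1 - 1 / (p i : ℝ))) =
        (q : ℝ) ^ q * (q : ℝ) ^ ((q : ℝ) * δ) := by
      rcases Nat.eq_zero_or_pos q with h0 | hpos
      · simp [h0]
      · have hq0 : (0 : ℝ) < q := by exact_mod_cast hpos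
        rw [← Real.rpow_sum_of_pos hq0, ← Finset.mul_sum, hs, mul_add, mul_one,
          Real.rpow_add hq0, Real.rpow_natCast]
    have hqd : (q : ℝ) ^ ((q : ℝ) * δ) ≤ (k : ℝ) ^ ((k : ℝ) * δ / 2) := by
      have hqkR : (q : ℝ) ≤ k := by exact_mod_cast hqk
      have hq2R : 2 * (q : ℝ) ≤ k := by exact_mod_cast hq2
      calc (q : ℝ) ^ ((q : ℝ) * δ) ≤ (k : ℝ) ^ ((q : ℝ) * δ) :=
            Real.rpow_le_rpow (by positivity) hqkR (by positivity)
        _ ≤ _ := Real.rpow_le_rpow_of_exponent_le hkR (by nlinarith)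
    calc ∏ i, ((Nat.card (Tor (p i) (CycQ c.1)) : ℝ) * 2 ^ k)
        ≤ ∏ i, ((4 ^ k * (q : ℝ) ^ ((q : ℝ) * (1 - 1 / (p i : ℝ)))) * 2 ^ k) := by
          refine Finset.prod_le_prod (fun i _ => by positivity) fun i _ => ?_
          refine mul_le_mul_of_nonneg_right ?_ (by positivity)
          refine (tor_upper (β := CycQ c.1) (p i) (hp i)).trans ?_
          rw [← hq]
          gcongr
          norm_num
      _ = (8 ^ m) ^ k * ∏ i, (q : ℝ) ^ ((q : ℝ) * (1 - 1 / (p i : ℝ))) := by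
          rw [Finset.prod_mul_distrib, Finset.prod_mul_distrib]
          simp only [Finset.prod_const, Finset.card_univ, Fintype.card_fin]
          rw [show (8 : ℝ) = 4 * 2 by norm_num, mul_pow, mul_pow, ← pow_mul, ← pow_mul, ← pow_mul,
            ← pow_mul, mul_comm k m]
          ring
      _ = (8 ^ m) ^ k * ((q : ℝ) ^ q * (q : ℝ) ^ ((q : ℝ) * δ)) := by rw [hprod]
      _ ≤ (8 ^ m) ^ k * ((q : ℝ) ^ q * (k : ℝ) ^ ((k : ℝ) * δ / 2)) := by gcongr
      _ = _ := by ring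
  have h3 : ∑ c : {c : Equiv.Perm β // ∀ b, c b ≠ b},
      (Nat.card (CycQ c.1) : ℝ) ^ Nat.card (CycQ c.1) ≤ k.factorial * 8 ^ k := by
    have hsum : (∑ c : Equiv.Perm β, (Nat.card (CycQ c) : ℝ) ^ Nat.card (CycQ c)) ≤
        k.factorial * 8 ^ k := by
      have := sum_cyc_pow_le β
      rw [← hk] at this
      exact_mod_cast this
    refine le_trans ?_ hsum
    rw [← Finset.sum_subtype (Finset.univ.filter fun c : Equiv.Perm β => ∀ b, c b ≠ b)
      (p := fun c : Equiv.Perm β => ∀ b, c b ≠ b) (by simp)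
      (fun c : Equiv.Perm β => (Nat.card (CycQ c) : ℝ) ^ Nat.card (CycQ c))]
    exact Finset.sum_le_sum_of_subset_of_nonneg (Finset.filter_subset _ _)
      (fun _ _ _ => by positivity)
  calc _ ≤ _ := h1
    _ ≤ _ := Finset.sum_le_sum fun c _ => h2 c
    _ = ((8 ^ m) ^ k * (k : ℝ) ^ ((k : ℝ) * δ / 2)) *
        ∑ c : {c : Equiv.Perm β // ∀ b, c b ≠ b},
          (Nat.card (CycQ c.1) : ℝ) ^ Nat.card (CycQ c.1) := by rw [Finset.mul_sum]
    _ ≤ ((8 ^ m) ^ k * (k : ℝ) ^ ((k : ℝ) * δ / 2)) * (k.factorial * 8 ^ k) := by gcongr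
    _ = _ := by rw [mul_pow]; ring

/-! ### Tuples whose common power is nontrivial -/

theorem descFactorial_lower (n k : ℕ) (hk : k ≤ n) :
    (n : ℝ) ^ k ≤ Real.exp k * (n.descFactorial k : ℝ) := by
  have h1 : n ^ k * k.factorial ≤ k ^ k * n.descFactorial k := by
    rw [← Nat.descFactorial_self, Nat.descFactorial_eq_prod_range,
      Nat.descFactorial_eq_prod_range]
    have e1 : n ^ k = ∏ _i ∈ Finset.range k, n := by simp
    have e2 : k ^ k = ∏ _i ∈ Finset.range k, k := by simp
    rw [e1, e2, ← Finset.prod_mul_distrib, ← Finset.prod_mul_distrib]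
    refine Finset.prod_le_prod' fun i hi => ?_
    have hik : i < k := Finset.mem_range.mp hi
    obtain ⟨a, rfl⟩ := Nat.exists_eq_add_of_lt hik
    obtain ⟨b, rfl⟩ := Nat.exists_eq_add_of_le hk
    have ha : i + a + 1 - i = a + 1 := by omega
    have hb : i + a + 1 + b - i = a + 1 + b := by omega
    rw [ha, hb]
    nlinarith [Nat.zero_le (b * i)]
  have h2 := Real.pow_div_factorial_le_exp (k : ℝ) (by positivity) k
  have hf : (0 : ℝ) < k.factorial := by exact_mod_cast Nat.factorial_pos k
  rw [div_le_iff₀ hf] at h2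
  have h1' : (n : ℝ) ^ k * k.factorial ≤ (k : ℝ) ^ k * n.descFactorial k := by exact_mod_cast h1
  refine le_of_mul_le_mul_right (h1'.trans ?_) hf
  calc (k : ℝ) ^ k * n.descFactorial k ≤ (Real.exp k * k.factorial) * n.descFactorial k := by gcongr
    _ = _ := by ring

/-- tuples of permutations with a common nontrivial power -/
abbrev BadTup (m : ℕ) (p : Fin m → ℕ) (β : Type) : Type :=
  {x : Fin m → Equiv.Perm β // ∃ c : Equiv.Perm β, (∀ i, x i ^ p i = c) ∧ c ≠ 1}

theorem badTup_le_sum (m : ℕ) (p : Fin m → ℕ) (n : ℕ) :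
    Nat.card (BadTup m p (Fin n)) ≤ ∑ s : {s : Finset (Fin n) // s.Nonempty},
      (∏ i, Nat.card (Tor (p i) {a // a ∉ s.1})) * Nat.card (DerTup m p {a // a ∈ s.1}) := by
  classical
  let Tgt : Type := Σ s : {s : Finset (Fin n) // s.Nonempty},
    (∀ i, Tor (p i) {a // a ∉ s.1}) × DerTup m p {a // a ∈ s.1}
  have hcard : Nat.card Tgt = ∑ s : {s : Finset (Fin n) // s.Nonempty},
      (∏ i, Nat.card (Tor (p i) {a // a ∉ s.1})) * Nat.card (DerTup m p {a // a ∈ s.1}) := by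
    rw [Nat.card_sigma]
    refine Finset.sum_congr rfl fun s _ => ?_
    rw [Nat.card_prod, Nat.card_pi]
  rw [← hcard]
  have hex : ∀ z : BadTup m p (Fin n), ∃ w : Tgt,
      ∀ i, (∀ a : {a // a ∉ w.1.1}, (((w.2.1 i).1 a : Fin n)) = z.1 i a) ∧
        (∀ a : {a // a ∈ w.1.1}, ((w.2.2.1 i a : Fin n)) = z.1 i a) := by
    rintro ⟨x, c, hx, hc⟩
    let s : Finset (Fin n) := Finset.univ.filter fun a => c a ≠ a
    have hs : ∀ a, a ∈ s ↔ c a ≠ a := by intro a; simp [s]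
    have hne : s.Nonempty := by
      by_contra hcon
      rw [Finset.not_nonempty_iff_eq_empty] at hcon
      apply hc
      ext a
      have : a ∉ s := by rw [hcon]; simp
      rw [hs, not_not] at this
      simp [this]
    have hpres : ∀ i a, x i a ∈ s ↔ a ∈ s := by
      intro i a
      have hcomm := (commute_of_pow (hx i)).eq
      have h1 : c (x i a) = x i (c a) := (DFunLike.congr_fun hcomm a).symm
      rw [hs, hs, h1]
      exact (x i).injective.ne_iff
    have hpres' : ∀ i a, x i a ∉ s ↔ a ∉ s := fun i a => not_congr (hpres i a)
    have hcs : ∀ a, c a ∈ s ↔ a ∈ s := by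
      intro a
      rw [hs, hs]
      exact c.injective.ne_iff
    refine ⟨⟨⟨s, hne⟩, fun i => ⟨(x i).subtypePerm (hpres' i), ?_⟩,
      fun i => (x i).subtypePerm (hpres i), c.subtypePerm hcs, ?_, ?_⟩, ?_⟩
    · rw [Equiv.Perm.subtypePerm_pow]
      ext a
      have ha := a.2
      simp only [hs, not_not] at ha
      simp [hx i, ha]
    · intro i
      rw [Equiv.Perm.subtypePerm_pow]
      ext a
      simp [hx i]
    · intro a h
      exact (hs a.1).mp a.2 (congrArg Subtype.val h)
    · intro i
      exact ⟨fun a => rfl, fun a => rfl⟩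
  choose F hF using hex
  refine Nat.card_le_card_of_injective F ?_
  intro z w h
  apply Subtype.ext
  funext i
  ext a
  have hz := hF z i
  have hw := hF w i
  rw [h] at hz
  by_cases ha : a ∈ (F w).1.1
  · rw [← hz.2 ⟨a, ha⟩, ← hw.2 ⟨a, ha⟩]
  · rw [← hz.1 ⟨a, ha⟩, ← hw.1 ⟨a, ha⟩]

theorem badTup_bound (m : ℕ) (p : Fin m → ℕ) (hp : ∀ i, 1 ≤ p i) (δ : ℝ) (hδ : 0 < δ)
    (hs : ∑ i, (1 - 1 / (p i : ℝ)) = 1 + δ) (n : ℕ) :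
    (Nat.card (BadTup m p (Fin n)) : ℝ) ≤ (∏ i, (Nat.card (Tor (p i) (Fin n)) : ℝ)) *
      ∑ k ∈ Finset.range n, ((∏ i, ((p i : ℝ) + 2)) * (8 ^ m * 8) * Real.exp δ *
        (n : ℝ) ^ (-(δ / 2))) ^ (k + 1) := by
  classical
  set G : ℝ := ∏ i, (Nat.card (Tor (p i) (Fin n)) : ℝ) with hG
  set K : ℝ := ∏ i, ((p i : ℝ) + 2) with hK
  have hG0 : 0 ≤ G := Finset.prod_nonneg fun i _ => by positivity
  have hK0 : 0 ≤ K := Finset.prod_nonneg fun i _ => by positivity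
  -- bound for a fixed size of the support
  let g : ℕ → ℝ := fun k => if k = 0 then 0 else
    (∏ i, (Nat.card (Tor (p i) (Fin (n - k))) : ℝ)) * Nat.card (DerTup m p (Fin k))
  have hg0 : ∀ k, 0 ≤ g k := by
    intro k
    simp only [g]
    split_ifs
    · exact le_rfl
    · positivity
  have h1 : (Nat.card (BadTup m p (Fin n)) : ℝ) ≤
      ∑ k ∈ Finset.range (n + 1), (n.choose k : ℝ) * g k := by
    have hb : (Nat.card (BadTup m p (Fin n)) : ℝ) ≤
        ∑ s : {s : Finset (Fin n) // s.Nonempty},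
          (∏ i, (Nat.card (Tor (p i) {a // a ∉ s.1}) : ℝ)) *
            Nat.card (DerTup m p {a // a ∈ s.1}) := by
      exact_mod_cast badTup_le_sum m p n
    have he : ∀ s : {s : Finset (Fin n) // s.Nonempty},
        (∏ i, (Nat.card (Tor (p i) {a // a ∉ s.1}) : ℝ)) *
            Nat.card (DerTup m p {a // a ∈ s.1}) = g s.1.card := by
      intro s
      have hc : s.1.card ≠ 0 := (Finset.card_pos.mpr s.2).ne'
      simp only [g, if_neg hc]
      congr 1
      · refine Finset.prod_congr rfl fun i _ => ?_
        rw [tor_card_congr (p i) (α := {a // a ∉ s.1}) (β := Fin (n - s.1.card))]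
        refine Fintype.equivOfCardEq ?_
        rw [Fintype.card_subtype_compl]
        simp
      · congr 1
        let e : {a // a ∈ s.1} ≃ Fin s.1.card := s.1.equivFin
        refine Nat.card_congr (Equiv.subtypeEquiv
          (Equiv.piCongrRight fun _ => e.permCongrHom.toEquiv) fun x => ?_)
        constructor
        · rintro ⟨c, hc1, hc2⟩
          refine ⟨e.permCongrHom c, fun i => ?_, fun b => ?_⟩
          · change (e.permCongrHom (x i)) ^ p i = e.permCongrHom c
            rw [← map_pow, hc1]
          · intro hb
            apply hc2 (e.symm b)
            apply e.injective
            simpa using hb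
        · rintro ⟨c, hc1, hc2⟩
          refine ⟨e.permCongrHom.symm c, fun i => ?_, fun b => ?_⟩
          · apply e.permCongrHom.injective
            rw [map_pow, MulEquiv.apply_symm_apply]
            exact hc1 i
          · intro hb
            apply hc2 (e b)
            apply e.symm.injective
            simpa using hb
    rw [Finset.sum_congr rfl fun s _ => he s] at hb
    refine hb.trans ?_
    rw [← Finset.sum_subtype (Finset.univ.filter fun s : Finset (Fin n) => s.Nonempty)
      (p := fun s : Finset (Fin n) => s.Nonempty) (by simp) (fun s => g s.card)]
    refine (Finset.sum_le_sum_of_subset_of_nonneg (Finset.filter_subset _ _)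
      (fun _ _ _ => hg0 _)).trans_eq ?_
    have := Finset.sum_powerset_apply_card g (x := (Finset.univ : Finset (Fin n)))
    simpa using this
  have h2 : ∀ k ∈ Finset.range n, (n.choose (k + 1) : ℝ) * g (k + 1) ≤
      G * (K * (8 ^ m * 8) * Real.exp δ * (n : ℝ) ^ (-(δ / 2))) ^ (k + 1) := by
    intro k' hk'
    have hk'n := Finset.mem_range.mp hk'
    set k := k' + 1 with hk
    have hkn : k ≤ n := by omega
    have hk1 : 1 ≤ k := by omega
    simp only [g, if_neg (show k ≠ 0 by omega)]
    set D : ℝ := (n.descFactorial k : ℝ) with hD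
    have hD0 : 0 < D := by
      rw [hD]; exact_mod_cast Nat.descFactorial_pos.mpr hkn
    have hn0 : (0 : ℝ) < n := by exact_mod_cast (by omega : 0 < n)
    have hkR : (1 : ℝ) ≤ k := by exact_mod_cast hk1
    have hknR : (k : ℝ) ≤ n := by exact_mod_cast hkn
    -- torsion part
    have hP : (∏ i, (Nat.card (Tor (p i) (Fin (n - k))) : ℝ)) * (D * D ^ δ) ≤ K ^ k * G := by
      have e1 : ∏ i, D ^ (1 - 1 / (p i : ℝ)) = D * D ^ δ := by
        rw [← Real.rpow_sum_of_pos hD0, hs, Real.rpow_add hD0, Real.rpow_one]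
      rw [← e1, ← Finset.prod_mul_distrib, hK, hG, ← Finset.prod_pow, ← Finset.prod_mul_distrib]
      refine Finset.prod_le_prod (fun i _ => by positivity) fun i _ => ?_
      have := tor_steps (p i) (hp i) (n - k) k
      rw [Nat.sub_add_cancel hkn] at this
      exact this
    -- derangement part
    have hDer := derTup_bound m p hp δ hδ hs (Fin k) (by simpa using hk1)
    rw [Fintype.card_fin] at hDer
    have hch : (n.choose k : ℝ) * k.factorial = D := by
      rw [hD, Nat.descFactorial_eq_factorial_mul_choose]; push_cast; ring
    -- analytic part
    have hDl : (n : ℝ) ^ ((k : ℝ) * δ) ≤ Real.exp δ ^ k * D ^ δ := by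
      have := descFactorial_lower n k hkn
      have h3 := Real.rpow_le_rpow (by positivity) this hδ.le
      rw [Real.mul_rpow (by positivity) (by positivity), ← Real.rpow_natCast,
        ← Real.rpow_mul hn0.le, ← Real.exp_mul] at h3
      rw [← Real.exp_nat_mul]
      exact h3
    have hkk : (k : ℝ) ^ ((k : ℝ) * δ / 2) ≤ (n : ℝ) ^ ((k : ℝ) * δ / 2) :=
      Real.rpow_le_rpow (by positivity) hknR (by positivity)
    have hnn : (n : ℝ) ^ ((k : ℝ) * δ / 2) =
        ((n : ℝ) ^ (-(δ / 2))) ^ k * (n : ℝ) ^ ((k : ℝ) * δ) := by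
      rw [← Real.rpow_natCast ((n : ℝ) ^ (-(δ / 2))), ← Real.rpow_mul hn0.le, ← Real.rpow_add hn0]
      congr 1; ring
    set P : ℝ := ∏ i, (Nat.card (Tor (p i) (Fin (n - k))) : ℝ) with hPdef
    have hP0 : 0 ≤ P := Finset.prod_nonneg fun i _ => by positivity
    set u : ℝ := (n : ℝ) ^ (-(δ / 2)) with hu
    have hu0 : 0 ≤ u := by positivity
    have hDd : 0 < D ^ δ := by positivity
    calc (n.choose k : ℝ) * (P * Nat.card (DerTup m p (Fin k)))
        ≤ (n.choose k : ℝ) * (P * (k.factorial * (8 ^ m * 8) ^ k *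
          (k : ℝ) ^ ((k : ℝ) * δ / 2))) := by gcongr
      _ = (P * D) * ((8 ^ m * 8) ^ k * (k : ℝ) ^ ((k : ℝ) * δ / 2)) := by rw [← hch]; ring
      _ ≤ (P * D) * ((8 ^ m * 8) ^ k * (u ^ k * (Real.exp δ ^ k * D ^ δ))) := by
          gcongr
          refine hkk.trans ?_
          rw [hnn]
          gcongr
      _ = (P * (D * D ^ δ)) * ((8 ^ m * 8) ^ k * (u ^ k * Real.exp δ ^ k)) := by ring
      _ ≤ (K ^ k * G) * ((8 ^ m * 8) ^ k * (u ^ k * Real.exp δ ^ k)) := by gcongr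
      _ = G * (K * (8 ^ m * 8) * Real.exp δ * u) ^ k := by
          simp only [mul_pow]; ring
  refine h1.trans ?_
  rw [Finset.sum_range_succ', Finset.mul_sum]
  have hgz : g 0 = 0 := by simp [g]
  rw [hgz, mul_zero, add_zero]
  exact Finset.sum_le_sum h2

/-! ### Homomorphisms as tuples -/

theorem torus_gen_pow (m : ℕ) (p : Fin m → ℕ) (i j : Fin m) :
    (PresentedGroup.of (rels := torusRels m p) i) ^ p i =
      (PresentedGroup.of (rels := torusRels m p) j) ^ p j := by
  have h : PresentedGroup.mk (torusRels m p)
      (FreeGroup.of i ^ p i * (FreeGroup.of j ^ p j)⁻¹) = 1 :=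
    PresentedGroup.one_of_mem ⟨i, j, rfl⟩
  rw [map_mul, map_inv, map_pow, map_pow, mul_inv_eq_one] at h
  exact h

theorem phi_of (m : ℕ) (p : Fin m → ℕ) (i : Fin m) :
    PhiMap m p (PresentedGroup.of i) = PresentedGroup.of i :=
  PresentedGroup.toGroup.of _

theorem ker_le_iff (m : ℕ) (p : Fin m → ℕ) {H : Type} [Group H] (ρ : TorusKnotGroup m p →* H) :
    (PhiMap m p).ker ≤ ρ.ker ↔ ∀ i, ρ (PresentedGroup.of i) ^ p i = 1 := by
  constructor
  · intro h i
    have : (PresentedGroup.of (rels := torusRels m p) i) ^ p i ∈ (PhiMap m p).ker := by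
      rw [MonoidHom.mem_ker, map_pow, phi_of, cyclicFreeProduct_gen_pow]
    have := h this
    rwa [MonoidHom.mem_ker, map_pow] at this
  · intro h
    let ψ : CyclicFreeProduct m p →* H :=
      PresentedGroup.toGroup (f := fun i => ρ (PresentedGroup.of i)) (by
        rintro w ⟨i, rfl⟩
        simp only [map_pow, FreeGroup.lift_apply_of]
        exact h i)
    have hψ : ψ.comp (PhiMap m p) = ρ := by
      apply PresentedGroup.ext
      intro i
      rw [MonoidHom.comp_apply, phi_of]
      exact PresentedGroup.toGroup.of _
    intro g hg
    rw [MonoidHom.mem_ker] at hg ⊢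
    rw [← hψ, MonoidHom.comp_apply, hg, map_one]

theorem good_rel (m : ℕ) (p : Fin m → ℕ) (n : ℕ) (x : ∀ i, Tor (p i) (Fin n)) :
    ∀ w ∈ torusRels m p, FreeGroup.lift (fun i => (x i).1) w = 1 := by
  rintro w ⟨i, j, rfl⟩
  simp only [map_mul, map_pow, map_inv, FreeGroup.lift_apply_of]
  rw [(x i).2, (x j).2]
  simp

/-- homomorphisms factoring through `Φ` are tuples of torsion permutations -/
noncomputable def goodEquiv (m : ℕ) (p : Fin m → ℕ) (n : ℕ) :
    {ρ : TorusKnotGroup m p →* Equiv.Perm (Fin n) // (PhiMap m p).ker ≤ ρ.ker} ≃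
      (∀ i, Tor (p i) (Fin n)) where
  toFun ρ := fun i => ⟨ρ.1 (PresentedGroup.of i), (ker_le_iff m p ρ.1).mp ρ.2 i⟩
  invFun x := ⟨PresentedGroup.toGroup (good_rel m p n x), by
        rw [ker_le_iff]
        intro i
        rw [PresentedGroup.toGroup.of]
        exact (x i).2⟩
  left_inv ρ := by
    apply Subtype.ext
    apply PresentedGroup.ext
    intro i
    exact PresentedGroup.toGroup.of (good_rel m p n _)
  right_inv x := by
    funext i
    apply Subtype.ext
    exact PresentedGroup.toGroup.of (good_rel m p n x)

theorem finite_homs (m : ℕ) (p : Fin m → ℕ) (n : ℕ) :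
    Finite (TorusKnotGroup m p →* Equiv.Perm (Fin n)) := by
  refine Finite.of_injective
    (fun ρ => fun i : Fin m => ρ (PresentedGroup.of i)) ?_
  intro ρ σ h
  exact PresentedGroup.ext fun i => congrFun h i

theorem card_homs_le (m : ℕ) (p : Fin m → ℕ) (n : ℕ) :
    Nat.card (TorusKnotGroup m p →* Equiv.Perm (Fin n)) ≤
      Nat.card {ρ : TorusKnotGroup m p →* Equiv.Perm (Fin n) // (PhiMap m p).ker ≤ ρ.ker} +
        Nat.card (BadTup m p (Fin n)) := by
  classical
  have := finite_homs m p n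
  rw [← Nat.card_congr (Equiv.sumCompl
    (fun ρ : TorusKnotGroup m p →* Equiv.Perm (Fin n) => (PhiMap m p).ker ≤ ρ.ker)), Nat.card_sum]
  refine Nat.add_le_add_left ?_ _
  refine Nat.card_le_card_of_injective
    (fun ρ => ⟨fun i => ρ.1 (PresentedGroup.of i), ?_⟩) ?_
  · have h := ρ.2
    rw [ker_le_iff] at h
    push Not at h
    obtain ⟨j, hj⟩ := h
    refine ⟨_, fun i => ?_, hj⟩
    rw [← map_pow, ← map_pow, torus_gen_pow m p i j]
  · intro ρ σ h
    apply Subtype.ext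
    apply PresentedGroup.ext
    intro i
    exact congrFun (congrArg Subtype.val h) i

theorem homs_factor_through_Phi (m : ℕ) (p : Fin m → ℕ) (hp : ∀ i, 2 ≤ p i)
    (h : ∑ i, (1 : ℝ) / (p i : ℝ) < (m : ℝ) - 1) :
    Filter.Tendsto (fun n : ℕ =>
      (Nat.card {ρ : TorusKnotGroup m p →* Equiv.Perm (Fin n) //
          (PhiMap m p).ker ≤ ρ.ker} : ℝ) /
        (Nat.card (TorusKnotGroup m p →* Equiv.Perm (Fin n)) : ℝ))
      Filter.atTop (𝓝 1) := by
  set δ : ℝ := (m : ℝ) - 1 - ∑ i, (1 : ℝ) / (p i : ℝ) with hδdef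
  have hδ : 0 < δ := by linarith
  have hs : ∑ i, (1 - 1 / (p i : ℝ)) = 1 + δ := by
    rw [Finset.sum_sub_distrib]
    simp only [Finset.sum_const, Finset.card_univ, Fintype.card_fin, nsmul_eq_mul, mul_one]
    rw [hδdef]; ring
  have hp1 : ∀ i, 1 ≤ p i := fun i => le_trans (by norm_num) (hp i)
  set A : ℝ := (∏ i, ((p i : ℝ) + 2)) * (8 ^ m * 8) * Real.exp δ with hA
  let r : ℕ → ℝ := fun n => A * (n : ℝ) ^ (-(δ / 2))
  have hA0 : 0 ≤ A := by
    have : 0 ≤ ∏ i, ((p i : ℝ) + 2) := Finset.prod_nonneg fun i _ => by positivity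
    positivity
  have hr0 : ∀ n, 0 ≤ r n := fun n => by
    simp only [r]; positivity
  have hr : Tendsto r atTop (𝓝 0) := by
    have h1 := (tendsto_rpow_neg_atTop (half_pos hδ)).comp (tendsto_natCast_atTop_atTop (R := ℝ))
    have h2 := h1.const_mul A
    simpa [r, Function.comp_def] using h2
  have hlow : Tendsto (fun n => 1 / (1 + 2 * r n)) atTop (𝓝 1) := by
    have h1 : Tendsto (fun n => 1 + 2 * r n) atTop (𝓝 (1 + 2 * 0)) :=
      (hr.const_mul 2).const_add 1
    have h2 := h1.inv₀ (by norm_num)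
    simpa using h2
  refine tendsto_of_tendsto_of_tendsto_of_le_of_le' hlow tendsto_const_nhds ?_ ?_
  · filter_upwards [hr.eventually (gt_mem_nhds (show (0 : ℝ) < 1 / 2 by norm_num))] with n hn
    have hgood : (Nat.card {ρ : TorusKnotGroup m p →* Equiv.Perm (Fin n) //
        (PhiMap m p).ker ≤ ρ.ker} : ℝ) = ∏ i, (Nat.card (Tor (p i) (Fin n)) : ℝ) := by
      rw [Nat.card_congr (goodEquiv m p n), Nat.card_pi]
      push_cast; rfl
    set G := (Nat.card {ρ : TorusKnotGroup m p →* Equiv.Perm (Fin n) //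
        (PhiMap m p).ker ≤ ρ.ker} : ℝ) with hG
    have hfin := finite_homs m p n
    have hG0 : 0 < G := by
      rw [hgood]
      refine Finset.prod_pos fun i _ => ?_
      have : Nonempty (Tor (p i) (Fin n)) := ⟨⟨1, one_pow _⟩⟩
      exact_mod_cast Nat.card_pos
    have hb := badTup_bound m p hp1 δ hδ hs n
    rw [← hgood] at hb
    have hsum : ∑ k ∈ Finset.range n, (r n) ^ (k + 1) ≤ 2 * r n := by
      calc ∑ k ∈ Finset.range n, (r n) ^ (k + 1)
          ≤ ∑ k ∈ Finset.range n, (1 / 2 : ℝ) ^ k * r n := by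
            refine Finset.sum_le_sum fun k _ => ?_
            rw [pow_succ]
            have := hr0 n
            gcongr
        _ = (∑ k ∈ Finset.range n, (1 / 2 : ℝ) ^ k) * r n := by rw [Finset.sum_mul]
        _ ≤ 2 * r n := mul_le_mul_of_nonneg_right (sum_geometric_two_le n) (hr0 n)
    have htot : (Nat.card (TorusKnotGroup m p →* Equiv.Perm (Fin n)) : ℝ) ≤
        G + Nat.card (BadTup m p (Fin n)) := by
      rw [hG]; exact_mod_cast card_homs_le m p n
    have htot' : (Nat.card (TorusKnotGroup m p →* Equiv.Perm (Fin n)) : ℝ) ≤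
        G * (1 + 2 * r n) := by
      have : G * ∑ k ∈ Finset.range n, (r n) ^ (k + 1) ≤ G * (2 * r n) := by gcongr
      have hb' : (Nat.card (BadTup m p (Fin n)) : ℝ) ≤
        G * ∑ k ∈ Finset.range n, (r n) ^ (k + 1) := hb
      linarith
    have hpos : (0 : ℝ) < Nat.card (TorusKnotGroup m p →* Equiv.Perm (Fin n)) := by
      exact_mod_cast Nat.card_pos
    have := hr0 n
    rw [div_le_div_iff₀ (by positivity) hpos, one_mul]
    exact htot'
  · filter_upwards with n
    have hfin := finite_homs m p n
    refine div_le_one_of_le₀ ?_ (by positivity)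
    exact_mod_cast Nat.card_le_card_of_injective _ Subtype.val_injective
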